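/- Let S = {1,…,N} be a finite set, Q a conservative irreducible rate matrix on S, and B : S → ℝ. Define the operator A on functions g : S → ℝ by (Ag)(i) = B(i)g(i) + (Qg)(i). Then there exist a strictly positive function φ̄ : S → (0,∞) and a unique real number λ such that Aφ̄ = λφ̄, and λ admits the variational (Donsker–Varadhan) representation λ = sup_{π ∈ 𝒫(S)} inf_{g : S → (0,∞)} Σ_{i ∈ S} π_i (Ag)(i)/g(i) = sup_{π ∈ 𝒫(S)} ( Σ_{i ∈ S} B(i) π_i − I(π) ). -/

import Mathlib

/-!
For a matrix `M` commuting with an entrywise positive matrix `P`, let `P x` maximize the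
Collatz–Wielandt number `r y = min (M y) i / y i` over the image under `P` of the simplex. If
`y = P x` were not an eigenvector, then `M y - r y • y` would be nonnegative and nonzero, so `P`
would map it to a positive vector, that is, `r (P y) > r y`. For an irreducible matrix `A` with
nonnegative off-diagonal entries such a `P` is a sum of powers of a translate `A + c`. So `A` and
its transpose have positive eigenvectors `φ` and `ψ`, and pairing the two shows that all positive
eigenvectors belong to the same eigenvalue `lam`.

In the variational formula, `g = φ` bounds every infimum by `lam`. The measure `π ∝ ψ * φ` attains
`lam`: with `L = log (g / φ)`, the inequality `log t ≤ t - 1` gives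
`φ j * (1 + L j - L i) ≤ φ i * (g j / g i)`, and in the sum of these against `ψ i * A i j` the terms
containing `L` cancel.
-/

open Matrix

namespace DonskerVaradhan

variable {ι : Type*}

section CollatzWielandt

variable [Fintype ι]

lemma mulVec_pos {P : Matrix ι ι ℝ} (hP : ∀ i j, 0 < P i j) {x : ι → ℝ} (hx : 0 < x) (i : ι) :
    0 < (P *ᵥ x) i := by
  obtain ⟨hx₀, j, hj⟩ := Pi.lt_def.mp hx
  exact Finset.sum_pos' (fun k _ => mul_nonneg (hP i k).le (hx₀ k))
    ⟨j, Finset.mem_univ j, mul_pos (hP i j) hj⟩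

lemma inv_sum_smul_mem_stdSimplex {x : ι → ℝ} (hx : 0 < x) :
    (∑ i, x i)⁻¹ • x ∈ stdSimplex ℝ ι := by
  have hsum : 0 < ∑ i, x i := Fintype.sum_pos hx
  refine ⟨fun i => mul_nonneg (inv_pos.mpr hsum).le (hx.le i), ?_⟩
  simp only [Pi.smul_apply, smul_eq_mul]
  rw [← Finset.mul_sum, inv_mul_cancel₀ hsum.ne']

variable [Nonempty ι]

/-- The Collatz–Wielandt number of `x`, the largest `μ` with `μ • x ≤ M *ᵥ x` when `x` has positive
entries. Entries `x i = 0` contribute the junk value `0` to the minimum. -/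
noncomputable def collatzWielandt (M : Matrix ι ι ℝ) (x : ι → ℝ) : ℝ :=
  Finset.univ.inf' Finset.univ_nonempty fun i => (M *ᵥ x) i / x i

lemma collatzWielandt_smul_le (M : Matrix ι ι ℝ) {x : ι → ℝ} (hx : ∀ i, 0 < x i) :
    collatzWielandt M x • x ≤ M *ᵥ x := fun i =>
  (le_div_iff₀ (hx i)).mp (Finset.inf'_le _ (Finset.mem_univ i))

lemma lt_collatzWielandt_iff {M : Matrix ι ι ℝ} {x : ι → ℝ} (hx : ∀ i, 0 < x i) {μ : ℝ} :
    μ < collatzWielandt M x ↔ ∀ i, μ * x i < (M *ᵥ x) i := by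
  simp only [collatzWielandt, Finset.lt_inf'_iff, Finset.mem_univ, true_imp_iff, lt_div_iff₀ (hx _)]

lemma collatzWielandt_smul (M : Matrix ι ι ℝ) (x : ι → ℝ) {c : ℝ} (hc : c ≠ 0) :
    collatzWielandt M (c • x) = collatzWielandt M x := by
  simp only [collatzWielandt, mulVec_smul, Pi.smul_apply, smul_eq_mul, mul_div_mul_left _ _ hc]

lemma continuousOn_collatzWielandt (M : Matrix ι ι ℝ) :
    ContinuousOn (collatzWielandt M) {x | ∀ i, 0 < x i} := by
  refine ContinuousOn.finset_inf'_apply _ fun i _ => ContinuousOn.div ?_ ?_ fun x hx => (hx i).ne'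
  · exact ((continuous_apply i).comp (continuous_const.matrix_mulVec continuous_id)).continuousOn
  · exact (continuous_apply i).continuousOn

theorem exists_pos_eigenvector_of_commute {M P : Matrix ι ι ℝ} (hP : ∀ i j, 0 < P i j)
    (hPM : Commute P M) : ∃ (φ : ι → ℝ) (μ : ℝ), (∀ i, 0 < φ i) ∧ M *ᵥ φ = μ • φ := by
  classical
  have hpos : ∀ x ∈ stdSimplex ℝ ι, ∀ i, 0 < (P *ᵥ x) i := fun x hx => by
    refine mulVec_pos hP (lt_of_le_of_ne hx.1 ?_)
    rintro rfl
    simpa using hx.2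
  have hcont : ContinuousOn (fun x => collatzWielandt M (P *ᵥ x)) (stdSimplex ℝ ι) :=
    (continuousOn_collatzWielandt M).comp
      (continuous_const.matrix_mulVec continuous_id).continuousOn hpos
  obtain ⟨x, hx, hmax⟩ := (isCompact_stdSimplex ℝ ι).exists_isMaxOn
    ⟨_, single_mem_stdSimplex ℝ (Classical.arbitrary ι)⟩ hcont
  set y := P *ᵥ x
  set μ := collatzWielandt M y
  have hy : ∀ i, 0 < y i := hpos x hx
  refine ⟨y, μ, hy, ?_⟩
  by_contra hne
  have hdefect : 0 < M *ᵥ y - μ • y :=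
    sub_pos.mpr (lt_of_le_of_ne (collatzWielandt_smul_le M hy) (Ne.symm hne))
  have hy₀ : 0 < y := Pi.lt_def.mpr ⟨fun i => (hy i).le, Classical.arbitrary ι, hy _⟩
  have himprove : μ < collatzWielandt M (P *ᵥ y) := by
    refine (lt_collatzWielandt_iff (mulVec_pos hP hy₀)).mpr fun i => sub_pos.mp ?_
    have h := mulVec_pos hP hdefect i
    rwa [mulVec_sub, mulVec_smul, mulVec_mulVec, hPM.eq, ← mulVec_mulVec] at h
  have hsum : 0 < ∑ i, y i := Fintype.sum_pos hy₀
  have hle := hmax (inv_sum_smul_mem_stdSimplex hy₀)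
  simp only [Set.mem_ofPred_eq, mulVec_smul, collatzWielandt_smul M _ (inv_ne_zero hsum.ne')] at hle
  exact himprove.not_ge hle

end CollatzWielandt

section Metzler

/-- A matrix with nonnegative off-diagonal entries. Generators of Markov chains have this property,
and adding a potential on the diagonal preserves it. -/
def IsMetzler (A : Matrix ι ι ℝ) : Prop :=
  ∀ i j, i ≠ j → 0 ≤ A i j

lemma reflTransGen_pos_of_offDiag {A A' : Matrix ι ι ℝ}
    (h : ∀ i j, i ≠ j → 0 < A i j → 0 < A' i j) {i j : ι}
    (hij : Relation.ReflTransGen (fun i j => 0 < A i j) i j) :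
    Relation.ReflTransGen (fun i j => 0 < A' i j) i j := by
  refine Relation.reflTransGen_closed (fun a b hab => ?_) i j hij
  obtain rfl | hne := eq_or_ne a b
  · exact .refl
  · exact .single (h a b hne hab)

lemma isIrreducible_of_reflTransGen {M : Matrix ι ι ℝ} (hM : ∀ i j, 0 ≤ M i j)
    (hdiag : ∀ i, 0 < M i i)
    (hconn : ∀ i j, Relation.ReflTransGen (fun i j => 0 < M i j) i j) : M.IsIrreducible := by
  refine ⟨hM, fun i j => ?_⟩
  let := M.toQuiver
  induction hconn i j with
  | refl => exact ⟨Quiver.Path.nil.cons ⟨hdiag i⟩, Nat.succ_pos _⟩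
  | tail _ hbc ih =>
    obtain ⟨p, -⟩ := ih
    exact ⟨p.cons ⟨hbc⟩, Nat.succ_pos _⟩

lemma IsMetzler.exists_isIrreducible_add_smul_one [Finite ι] [DecidableEq ι] {A : Matrix ι ι ℝ}
    (hA : IsMetzler A) (hconn : ∀ i j, Relation.ReflTransGen (fun i j => 0 < A i j) i j) :
    ∃ c : ℝ, (A + c • (1 : Matrix ι ι ℝ)).IsIrreducible := by
  obtain ⟨c, hc⟩ := Finite.exists_le fun i => 1 - A i i
  have hdiag : ∀ i, 0 < (A + c • (1 : Matrix ι ι ℝ)) i i := fun i => by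
    simp only [Matrix.add_apply, Matrix.smul_apply, one_apply_eq, smul_eq_mul]
    linarith [hc i]
  have hoff : ∀ i j, i ≠ j → (A + c • (1 : Matrix ι ι ℝ)) i j = A i j := fun i j hij => by
    simp [one_apply_ne hij]
  refine ⟨c, isIrreducible_of_reflTransGen (fun i j => ?_) hdiag fun i j => ?_⟩
  · obtain rfl | hij := eq_or_ne i j
    · exact (hdiag i).le
    · exact (hoff i j hij).symm ▸ hA i j hij
  · exact reflTransGen_pos_of_offDiag (fun a b hab h => (hoff a b hab).symm ▸ h) (hconn i j)

variable [Fintype ι]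

lemma exists_pos_commute_of_isIrreducible {M : Matrix ι ι ℝ}
    (hM : M.IsIrreducible) : ∃ P : Matrix ι ι ℝ, (∀ i j, 0 < P i j) ∧ Commute P M := by
  classical
  choose k _ hk using (isIrreducible_iff_exists_pow_pos hM.nonneg).mp hM
  refine ⟨∑ p : ι × ι, M ^ k p.1 p.2, fun i j => ?_, ?_⟩
  · rw [Matrix.sum_apply]
    exact Finset.sum_pos' (fun p _ => pow_apply_nonneg hM.nonneg _ i j)
      ⟨(i, j), Finset.mem_univ _, hk i j⟩
  · exact Commute.sum_left _ _ _ fun p _ => Commute.pow_self M _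

theorem IsMetzler.exists_pos_commute {A : Matrix ι ι ℝ} (hA : IsMetzler A)
    (hconn : ∀ i j, Relation.ReflTransGen (fun i j => 0 < A i j) i j) :
    ∃ P : Matrix ι ι ℝ, (∀ i j, 0 < P i j) ∧ Commute P A := by
  classical
  obtain ⟨c, hc⟩ := hA.exists_isIrreducible_add_smul_one hconn
  obtain ⟨P, hP, hcomm⟩ := exists_pos_commute_of_isIrreducible hc
  refine ⟨P, hP, ?_⟩
  simpa using hcomm.sub_right ((Commute.one_right P).smul_right c)

lemma eigenvalue_eq_of_pos_left_right [Nonempty ι] {M : Matrix ι ι ℝ} {φ ψ : ι → ℝ} {μ ν : ℝ}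
    (hφ : ∀ i, 0 < φ i) (hψ : ∀ i, 0 < ψ i) (hright : M *ᵥ φ = μ • φ) (hleft : ψ ᵥ* M = ν • ψ) :
    μ = ν := by
  have hpos : 0 < ψ ⬝ᵥ φ :=
    Finset.sum_pos (fun i _ => mul_pos (hψ i) (hφ i)) Finset.univ_nonempty
  refine mul_right_cancel₀ hpos.ne' ?_
  calc μ * (ψ ⬝ᵥ φ) = ψ ⬝ᵥ M *ᵥ φ := by rw [hright, dotProduct_smul, smul_eq_mul]
    _ = ν * (ψ ⬝ᵥ φ) := by rw [dotProduct_mulVec, hleft, smul_dotProduct, smul_eq_mul]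

theorem IsMetzler.exists_pos_left_right_eigenvectors [Nonempty ι] {A : Matrix ι ι ℝ}
    (hA : IsMetzler A) (hconn : ∀ i j, Relation.ReflTransGen (fun i j => 0 < A i j) i j) :
    ∃ (φ ψ : ι → ℝ) (lam : ℝ), (∀ i, 0 < φ i) ∧ (∀ i, 0 < ψ i) ∧
      A *ᵥ φ = lam • φ ∧ ψ ᵥ* A = lam • ψ := by
  obtain ⟨P, hP, hcomm⟩ := hA.exists_pos_commute hconn
  obtain ⟨φ, μ, hφ, hright⟩ := exists_pos_eigenvector_of_commute hP hcomm
  have hcommT : Commute Pᵀ Aᵀ := by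
    rw [Commute, SemiconjBy, ← transpose_mul, ← transpose_mul, hcomm.eq]
  obtain ⟨ψ, ν, hψ, hleft⟩ := exists_pos_eigenvector_of_commute (fun i j => hP j i) hcommT
  rw [mulVec_transpose] at hleft
  obtain rfl := eigenvalue_eq_of_pos_left_right hφ hψ hright hleft
  exact ⟨φ, ψ, μ, hφ, hψ, hright, hleft⟩

end Metzler

section Variational

variable [Fintype ι]

/-- The values, for positive functions `g`, of the average over `π` of the quotients
`(A *ᵥ g) i / g i`. For `A` the generator of a Markov chain their infimum is `-I π`, where `I` is
the Donsker–Varadhan functional. -/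
def quotientAverages (A : Matrix ι ι ℝ) (π : ι → ℝ) : Set ℝ :=
  {s | ∃ g : ι → ℝ, (∀ i, 0 < g i) ∧ s = ∑ i, π i * (A *ᵥ g) i / g i}

lemma IsMetzler.bddBelow_quotientAverages {A : Matrix ι ι ℝ} (hA : IsMetzler A) {π : ι → ℝ}
    (hπ : ∀ i, 0 ≤ π i) : BddBelow (quotientAverages A π) := by
  classical
  refine ⟨∑ i, π i * A i i, ?_⟩
  rintro _ ⟨g, hg, rfl⟩
  refine Finset.sum_le_sum fun i _ => ?_
  rw [mul_div_assoc]
  refine mul_le_mul_of_nonneg_left ((le_div_iff₀ (hg i)).mpr ?_) (hπ i)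
  rw [mulVec, dotProduct, ← Finset.add_sum_erase _ _ (Finset.mem_univ i)]
  exact le_add_of_nonneg_right <| Finset.sum_nonneg fun j hj =>
    mul_nonneg (hA i j (Finset.ne_of_mem_erase hj).symm) (hg j).le

lemma eigenvalue_mem_quotientAverages {A : Matrix ι ι ℝ} {φ π : ι → ℝ} {lam : ℝ}
    (hφ : ∀ i, 0 < φ i) (hright : A *ᵥ φ = lam • φ) (hπ : ∑ i, π i = 1) :
    lam ∈ quotientAverages A π := by
  refine ⟨φ, hφ, ?_⟩
  calc lam = ∑ i, π i * lam := by rw [← Finset.sum_mul, hπ, one_mul]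
    _ = ∑ i, π i * (A *ᵥ φ) i / φ i := Finset.sum_congr rfl fun i _ => by
      rw [hright, Pi.smul_apply, smul_eq_mul, ← mul_assoc, mul_div_cancel_right₀ _ (hφ i).ne']

lemma mul_one_add_log_sub_log_le {a b u v : ℝ} (ha : 0 < a) (hb : 0 < b) (hu : 0 < u)
    (hv : 0 < v) : b * (1 + Real.log (v / b) - Real.log (u / a)) ≤ a * (v / u) := by
  have hlog : Real.log (v / b) - Real.log (u / a) ≤ v / b / (u / a) - 1 := by
    rw [← Real.log_div (by positivity) (by positivity)]
    exact Real.log_le_sub_one_of_pos (by positivity)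
  calc b * (1 + Real.log (v / b) - Real.log (u / a)) ≤ b * (v / b / (u / a)) :=
        mul_le_mul_of_nonneg_left (by linarith) hb.le
    _ = a * (v / u) := by field_simp

lemma IsMetzler.mulVec_mul_log_add_le {A : Matrix ι ι ℝ} (hA : IsMetzler A) {φ g : ι → ℝ}
    {lam : ℝ} (hφ : ∀ i, 0 < φ i) (hg : ∀ i, 0 < g i) (hright : A *ᵥ φ = lam • φ) (i : ι) :
    (A *ᵥ fun j => φ j * Real.log (g j / φ j)) i + lam * φ i * (1 - Real.log (g i / φ i)) ≤
      φ i * (A *ᵥ g) i / g i := by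
  have hentry : ∀ j, A i j * (φ j * (1 + Real.log (g j / φ j) - Real.log (g i / φ i))) ≤
      A i j * (φ i * (g j / g i)) := fun j => by
    obtain rfl | hij := eq_or_ne i j
    · rw [add_sub_cancel_right, div_self (hg i).ne']
    · exact mul_le_mul_of_nonneg_left (mul_one_add_log_sub_log_le (hφ i) (hφ j) (hg i) (hg j))
        (hA i j hij)
  have heig : lam * φ i = ∑ j, A i j * φ j := (congrFun hright i).symm
  calc (A *ᵥ fun j => φ j * Real.log (g j / φ j)) i + lam * φ i * (1 - Real.log (g i / φ i))
      = ∑ j, A i j * (φ j * (1 + Real.log (g j / φ j) - Real.log (g i / φ i))) := by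
        rw [heig, mulVec, dotProduct, Finset.sum_mul, ← Finset.sum_add_distrib]
        exact Finset.sum_congr rfl fun j _ => by ring
    _ ≤ ∑ j, A i j * (φ i * (g j / g i)) := Finset.sum_le_sum fun j _ => hentry j
    _ = φ i * (A *ᵥ g) i / g i := by
        rw [mulVec, dotProduct, Finset.mul_sum, Finset.sum_div]
        exact Finset.sum_congr rfl fun j _ => by ring

lemma IsMetzler.mul_dotProduct_le_of_eigenvectors {A : Matrix ι ι ℝ} (hA : IsMetzler A)
    {φ ψ g : ι → ℝ} {lam : ℝ} (hφ : ∀ i, 0 < φ i) (hψ : ∀ i, 0 ≤ ψ i) (hg : ∀ i, 0 < g i)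
    (hright : A *ᵥ φ = lam • φ) (hleft : ψ ᵥ* A = lam • ψ) :
    lam * (ψ ⬝ᵥ φ) ≤ ψ ⬝ᵥ fun i => φ i * (A *ᵥ g) i / g i := by
  set L : ι → ℝ := fun i => Real.log (g i / φ i)
  have hcancel : ψ ⬝ᵥ A *ᵥ (φ * L) = ∑ i, lam * (ψ i * (φ i * L i)) := by
    rw [dotProduct_mulVec, hleft, smul_dotProduct, smul_eq_mul, dotProduct, Finset.mul_sum]
    rfl
  calc lam * (ψ ⬝ᵥ φ)
      = ψ ⬝ᵥ A *ᵥ (φ * L) + ψ ⬝ᵥ fun i => lam * φ i * (1 - L i) := by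
        rw [hcancel, dotProduct, dotProduct, Finset.mul_sum, ← Finset.sum_add_distrib]
        exact Finset.sum_congr rfl fun i _ => by ring
    _ = ψ ⬝ᵥ fun i => (A *ᵥ (φ * L)) i + lam * φ i * (1 - L i) := (dotProduct_add ψ _ _).symm
    _ ≤ ψ ⬝ᵥ fun i => φ i * (A *ᵥ g) i / g i :=
        Finset.sum_le_sum fun i _ =>
          mul_le_mul_of_nonneg_left (hA.mulVec_mul_log_add_le hφ hg hright i) (hψ i)

theorem IsMetzler.isGreatest_sInf_quotientAverages [Nonempty ι] {A : Matrix ι ι ℝ}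
    (hA : IsMetzler A) {φ ψ : ι → ℝ} {lam : ℝ} (hφ : ∀ i, 0 < φ i) (hψ : ∀ i, 0 < ψ i)
    (hright : A *ᵥ φ = lam • φ) (hleft : ψ ᵥ* A = lam • ψ) :
    IsGreatest ((fun π => sInf (quotientAverages A π)) '' stdSimplex ℝ ι) lam := by
  have hψφ : 0 < ψ * φ :=
    Pi.lt_def.mpr
      ⟨fun i => (mul_pos (hψ i) (hφ i)).le, Classical.arbitrary ι, mul_pos (hψ _) (hφ _)⟩
  have hmem := inv_sum_smul_mem_stdSimplex hψφ
  refine ⟨⟨_, hmem, IsLeast.csInf_eq ⟨eigenvalue_mem_quotientAverages hφ hright hmem.2, ?_⟩⟩, ?_⟩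
  · rintro _ ⟨g, hg, rfl⟩
    have hle := hA.mul_dotProduct_le_of_eigenvectors hφ (fun i => (hψ i).le) hg hright hleft
    set Z := ∑ i, (ψ * φ) i
    have hZ : 0 < Z := Fintype.sum_pos hψφ
    calc lam = Z⁻¹ * (lam * Z) := by rw [mul_left_comm, inv_mul_cancel₀ hZ.ne', mul_one]
      _ ≤ Z⁻¹ * (ψ ⬝ᵥ fun i => φ i * (A *ᵥ g) i / g i) :=
          mul_le_mul_of_nonneg_left hle (inv_pos.mpr hZ).le
      _ = ∑ i, (Z⁻¹ • (ψ * φ)) i * (A *ᵥ g) i / g i := by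
          rw [dotProduct, Finset.mul_sum]
          refine Finset.sum_congr rfl fun i _ => ?_
          simp only [Pi.smul_apply, Pi.mul_apply, smul_eq_mul]
          ring
  · rintro _ ⟨π, hπ, rfl⟩
    exact csInf_le (hA.bddBelow_quotientAverages hπ.1)
      (eigenvalue_mem_quotientAverages hφ hright hπ.2)

variable [DecidableEq ι]

lemma quotientAverages_add_diagonal (A : Matrix ι ι ℝ) (B π : ι → ℝ) :
    quotientAverages (A + diagonal B) π =
      OrderIso.addLeft (∑ i, B i * π i) '' quotientAverages A π := by
  have hsplit : ∀ g : ι → ℝ, (∀ i, 0 < g i) → ∑ i, π i * ((A + diagonal B) *ᵥ g) i / g i =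
      ∑ i, B i * π i + ∑ i, π i * (A *ᵥ g) i / g i := fun g hg => by
    rw [← Finset.sum_add_distrib]
    refine Finset.sum_congr rfl fun i _ => ?_
    have := (hg i).ne'
    rw [add_mulVec, Pi.add_apply, mulVec_diagonal]
    field_simp
    ring
  ext s
  constructor
  · rintro ⟨g, hg, rfl⟩
    exact ⟨_, ⟨g, hg, rfl⟩, (hsplit g hg).symm⟩
  · rintro ⟨_, ⟨g, hg, rfl⟩, rfl⟩
    exact ⟨g, hg, (hsplit g hg).symm⟩

lemma IsMetzler.sInf_quotientAverages_add_diagonal {A : Matrix ι ι ℝ} (hA : IsMetzler A)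
    (B : ι → ℝ) {π : ι → ℝ} (hπ : ∀ i, 0 ≤ π i) :
    sInf (quotientAverages (A + diagonal B) π) =
      ∑ i, B i * π i - -sInf (quotientAverages A π) := by
  have hne : (quotientAverages A π).Nonempty := ⟨_, 1, fun _ => one_pos, rfl⟩
  rw [quotientAverages_add_diagonal, sub_neg_eq_add,
    ← OrderIso.map_csInf' _ hne (hA.bddBelow_quotientAverages hπ)]
  rfl

end Variational

section Generator

variable [Fintype ι] [DecidableEq ι]

/-- The matrix of the Markov generator `(Qg)(i) = ∑ j, Q i j * (g j - g i)`. The diagonal of `Q`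
does not enter; if `Q` is conservative, this is `Q` itself. -/
def generator (Q : ι → ι → ℝ) : Matrix ι ι ℝ :=
  of Q - diagonal fun i => ∑ j, Q i j

lemma generator_mulVec (Q : ι → ι → ℝ) (g : ι → ℝ) (i : ι) :
    (generator Q *ᵥ g) i = ∑ j, Q i j * (g j - g i) := by
  rw [generator, sub_mulVec, Pi.sub_apply, mulVec_diagonal, Finset.sum_mul]
  simp only [mul_sub, Finset.sum_sub_distrib]
  rfl

lemma generator_add_diagonal_mulVec (Q : ι → ι → ℝ) (B g : ι → ℝ) (i : ι) :
    ((generator Q + diagonal B) *ᵥ g) i = B i * g i + ∑ j, Q i j * (g j - g i) := by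
  rw [add_mulVec, Pi.add_apply, generator_mulVec, mulVec_diagonal, add_comm]

lemma generator_add_diagonal_apply_ne (Q : ι → ι → ℝ) (B : ι → ℝ) {i j : ι} (hij : i ≠ j) :
    (generator Q + diagonal B) i j = Q i j := by
  simp [generator, hij]

end Generator

lemma reflTransGen_of_exists_path {α : Type*} {r : α → α → Prop}
    (h : ∀ i j, i ≠ j → ∃ k : ℕ, ∃ path : Fin (k + 1) → α,
      path 0 = i ∧ path (Fin.last k) = j ∧ ∀ l : Fin k, r (path l.castSucc) (path l.succ))
    (i j : α) : Relation.ReflTransGen r i j := by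
  obtain rfl | hij := eq_or_ne i j
  · exact .refl
  obtain ⟨k, path, rfl, rfl, hpath⟩ := h i j hij
  exact Fin.induction (motive := fun l => Relation.ReflTransGen r (path 0) (path l)) .refl
    (fun l hl => hl.tail (hpath l)) (Fin.last k)

lemma image_stdSimplex [Fintype ι] (F : (ι → ℝ) → ℝ) :
    F '' stdSimplex ℝ ι = {r | ∃ π : ι → ℝ, (∀ i, 0 ≤ π i) ∧ ∑ i, π i = 1 ∧ r = F π} := by
  ext r
  simp only [Set.mem_image, stdSimplex, Set.mem_ofPred_eq, and_assoc, eq_comm]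

end DonskerVaradhan

open DonskerVaradhan in
theorem principal_eigenvalue_donsker_varadhan_general {ι : Type*} [Fintype ι] [Nonempty ι]
    (Q : ι → ι → ℝ) (B : ι → ℝ) (hoff : ∀ i j, i ≠ j → 0 ≤ Q i j)
    (hirr : ∀ i j, Relation.ReflTransGen (fun i j => 0 < Q i j) i j) :
    ∃ φ : ι → ℝ, ∃ lam : ℝ,
      (∀ i, 0 < φ i) ∧
      (∀ i, B i * φ i + ∑ j, Q i j * (φ j - φ i) = lam * φ i) ∧
      (∀ lam' : ℝ, (∃ ψ : ι → ℝ, (∀ i, 0 < ψ i) ∧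
          ∀ i, B i * ψ i + ∑ j, Q i j * (ψ j - ψ i) = lam' * ψ i) → lam' = lam) ∧
      lam = sSup {r : ℝ | ∃ π : ι → ℝ, (∀ i, 0 ≤ π i) ∧ (∑ i, π i = 1) ∧
        r = sInf {s : ℝ | ∃ g : ι → ℝ, (∀ i, 0 < g i) ∧
          s = ∑ i, π i * (B i * g i + ∑ j, Q i j * (g j - g i)) / g i}} ∧
      lam = sSup {r : ℝ | ∃ π : ι → ℝ, (∀ i, 0 ≤ π i) ∧ (∑ i, π i = 1) ∧
        r = (∑ i, B i * π i) -
          (- sInf {s : ℝ | ∃ g : ι → ℝ, (∀ i, 0 < g i) ∧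
            s = ∑ i, π i * (∑ j, Q i j * (g j - g i)) / g i})} := by
  classical
  have hG : ∀ V : ι → ℝ, IsMetzler (generator Q + diagonal V) := fun V i j hij =>
    (generator_add_diagonal_apply_ne Q V hij).symm ▸ hoff i j hij
  obtain ⟨φ, ψ, lam, hφ, hψ, hright, hleft⟩ := (hG B).exists_pos_left_right_eigenvectors fun i j =>
    reflTransGen_pos_of_offDiag (A := of Q)
      (fun a b hab h => (generator_add_diagonal_apply_ne Q B hab).symm ▸ h) (hirr i j)
  have hmax := (hG B).isGreatest_sInf_quotientAverages hφ hψ hright hleft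
  have hsplit : (fun π => sInf (quotientAverages (generator Q + diagonal B) π)) '' stdSimplex ℝ ι =
      (fun π => ∑ i, B i * π i - -sInf (quotientAverages (generator Q) π)) '' stdSimplex ℝ ι :=
    Set.image_congr fun π hπ =>
      IsMetzler.sInf_quotientAverages_add_diagonal (by simpa using hG 0) B hπ.1
  simp only [← generator_add_diagonal_mulVec Q B]
  simp only [← generator_mulVec Q]
  refine ⟨φ, lam, hφ, congrFun hright, ?_, ?_, ?_⟩
  · rintro lam' ⟨χ, hχ, hχeig⟩
    exact eigenvalue_eq_of_pos_left_right hχ hψ (funext hχeig) hleft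
  · rw [← image_stdSimplex]
    exact hmax.csSup_eq.symm
  · rw [← image_stdSimplex]
    exact (hsplit ▸ hmax).csSup_eq.symm

/-- **Principal eigenvalue problem / Donsker–Varadhan representation.**
For a conservative irreducible rate matrix `Q` on the finite set `S = Fin N` and
`B : S → ℝ`, the operator `(A g)(i) = B i * g i + (Q g)(i)` has a strictly positive
eigenfunction `φ` with eigenvalue `lam`, the eigenvalue is unique among those with
positive eigenfunctions, and `lam` has the variational (Donsker–Varadhan) representation. -/
theorem principal_eigenvalue_donsker_varadhan
    (N : ℕ) (hN : 0 < N) (Q : Fin N → Fin N → ℝ) (B : Fin N → ℝ)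
    (hoff : ∀ i j, i ≠ j → 0 ≤ Q i j)
    (hcons : ∀ i, ∑ j, Q i j = 0)
    (hirr : ∀ i j : Fin N, i ≠ j → ∃ k : ℕ, ∃ path : Fin (k + 1) → Fin N,
      path 0 = i ∧ path (Fin.last k) = j ∧
      ∀ l : Fin k, 0 < Q (path l.castSucc) (path l.succ)) :
    ∃ φ : Fin N → ℝ, ∃ lam : ℝ,
      (∀ i, 0 < φ i) ∧
      (∀ i, B i * φ i + ∑ j, Q i j * (φ j - φ i) = lam * φ i) ∧
      (∀ lam' : ℝ, (∃ ψ : Fin N → ℝ, (∀ i, 0 < ψ i) ∧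
          ∀ i, B i * ψ i + ∑ j, Q i j * (ψ j - ψ i) = lam' * ψ i) → lam' = lam) ∧
      lam = sSup {r : ℝ | ∃ π : Fin N → ℝ, (∀ i, 0 ≤ π i) ∧ (∑ i, π i = 1) ∧
        r = sInf {s : ℝ | ∃ g : Fin N → ℝ, (∀ i, 0 < g i) ∧
          s = ∑ i, π i * (B i * g i + ∑ j, Q i j * (g j - g i)) / g i}} ∧
      lam = sSup {r : ℝ | ∃ π : Fin N → ℝ, (∀ i, 0 ≤ π i) ∧ (∑ i, π i = 1) ∧
        r = (∑ i, B i * π i) -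
          (- sInf {s : ℝ | ∃ g : Fin N → ℝ, (∀ i, 0 < g i) ∧
            s = ∑ i, π i * (∑ j, Q i j * (g j - g i)) / g i})} := by
  have : Nonempty (Fin N) := ⟨⟨0, hN⟩⟩
  exact principal_eigenvalue_donsker_varadhan_general Q B hoff
    (DonskerVaradhan.reflTransGen_of_exists_path hirr)
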